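/- arXiv:2003.05189 — 3 statements merged into one kernel-verified Lean document; each statement's English description precedes it below -/
import Mathlib

section
/- Let (G, a) and (G', a') be attributed graphs with attributes in the same set Σ, let u be a vertex of G and u' a vertex of G', and suppose the set of exact matchings M(u, u') is nonempty. Then for every k ≥ 0: a_{k+1}(u) = a'_{k+1}(u') if and only if a(u) = a'(u') and there exists R ∈ M(u, u') such that a_k(v) = a'_k(v') for every (v, v') ∈ R. Equivalently, κ_subtree^{(k+1)}(u, u') = δ(a(u), a'(u')) · max_{R ∈ M(u,u')} Π_{(v,v') ∈ R} κ_subtree^{(k)}(v, v'). -/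
/-!
An exact matching `R` is a finite set of pairs whose two projections are bijections onto `N(u)`
and `N(u')`. Hence the multisets of depth-`k` labels over `N(u)` and `N(u')` agree if and only if
some bijection `N(u) → N(u')` preserves depth-`k` labels: a bijection transports one multiset to
the other (`ExactMatching.map_eq`), and conversely equal multisets are paired off element by
element (`Multiset.Rel.exists_pairs`). Since depth-`k` labels determine all labels of smaller
depth (`wlLabel_eq_of_le`), such a bijection also preserves attributes, and it equates the
neighbour multisets at every depth `≤ k`, so that together with `a u = a' u'` an induction on the
depth yields equality of the depth-`(k+1)` labels of `u` and `u'`.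
-/

open Finset

/-- A walk of length `k` starting at `u`, encoded as a function `Fin (k+1) → V`
with consecutive vertices adjacent. -/
def walks {V : Type*} (G : SimpleGraph V) [Fintype V] [DecidableEq V]
    [DecidableRel G.Adj] (k : ℕ) (u : V) : Finset (Fin (k+1) → V) :=
  Finset.univ.filter fun p => p 0 = u ∧ ∀ j : Fin k, G.Adj (p j.castSucc) (p j.succ)

open scoped Classical in
/-- The Dirac kernel. -/
noncomputable def dirac {α : Type*} (x y : α) : ℝ := if x = y then 1 else 0

/-- The walk kernel `κ_walk^{(k)}`. -/
noncomputable def walkKernel {V V' S : Type*} (G : SimpleGraph V) [Fintype V]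
    [DecidableEq V] [DecidableRel G.Adj] (a : V → S)
    (G' : SimpleGraph V') [Fintype V'] [DecidableEq V'] [DecidableRel G'.Adj]
    (a' : V' → S) (k : ℕ) (u : V) (u' : V') : ℝ :=
  ∑ p ∈ walks G k u, ∑ p' ∈ walks G' k u', dirac (a ∘ p) (a' ∘ p')

/-- The type of depth-`k` Weisfeiler-Lehman labels over an attribute set `S`. -/
def wlLabelType (S : Type u) : ℕ → Type u
  | 0 => S
  | k+1 => wlLabelType S k × Multiset (wlLabelType S k)

/-- The depth-`k` Weisfeiler-Lehman label of a vertex. -/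
def wlLabel {V : Type*} {S : Type*} (G : SimpleGraph V) [Fintype V]
    [DecidableRel G.Adj] (a : V → S) : (k : ℕ) → V → wlLabelType S k
  | 0, u => a u
  | k+1, u => (wlLabel G a k u, (G.neighborFinset u).val.map (wlLabel G a k))

/-- `R` is an exact matching of the neighborhoods of `u` and `u'`. -/
def ExactMatching {V V' S : Type*} (G : SimpleGraph V) [Fintype V]
    [DecidableRel G.Adj] (a : V → S)
    (G' : SimpleGraph V') [Fintype V'] [DecidableRel G'.Adj] (a' : V' → S)
    (u : V) (u' : V') (R : Finset (V × V')) : Prop :=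
  (∀ e ∈ R, e.1 ∈ G.neighborFinset u ∧ e.2 ∈ G'.neighborFinset u') ∧
  R.card = (G.neighborFinset u).card ∧
  R.card = (G'.neighborFinset u').card ∧
  (∀ e ∈ R, ∀ f ∈ R, (e.1 = f.1 ↔ e.2 = f.2)) ∧
  (∀ e ∈ R, a e.1 = a' e.2)

/-- Two related multisets are the projections of one multiset of related pairs. -/
theorem Multiset.Rel.exists_pairs {α β : Type*} {r : α → β → Prop} {s : Multiset α}
    {t : Multiset β} (h : Multiset.Rel r s t) :
    ∃ m : Multiset (α × β), m.map Prod.fst = s ∧ m.map Prod.snd = t ∧ ∀ e ∈ m, r e.1 e.2 := by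
  induction h with
  | zero => exact ⟨0, by simp⟩
  | @cons x y s t hxy _ ih =>
    obtain ⟨m, h1, h2, h3⟩ := ih
    refine ⟨(x, y) ::ₘ m, by simp [h1], by simp [h2], ?_⟩
    intro e he
    rcases Multiset.mem_cons.1 he with rfl | he
    · exact hxy
    · exact h3 e he

theorem wlLabel_eq_of_le {V V' S : Type*} (G : SimpleGraph V) [Fintype V]
    [DecidableRel G.Adj] (a : V → S) (G' : SimpleGraph V') [Fintype V'] [DecidableRel G'.Adj]
    (a' : V' → S) {j k : ℕ} (hjk : j ≤ k) {v : V} {v' : V'}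
    (h : wlLabel G a k v = wlLabel G' a' k v') : wlLabel G a j v = wlLabel G' a' j v' := by
  induction hjk with
  | refl => exact h
  | step _ ih => exact ih (congrArg Prod.fst h)

/-- Functions that agree along the pairs of an exact matching have equal multisets of values on
the two neighborhoods, because the cardinality conditions make both projections surjective. -/
theorem ExactMatching.map_eq {V V' S : Type*} {G : SimpleGraph V} [Fintype V] [DecidableEq V]
    [DecidableRel G.Adj] {a : V → S} {G' : SimpleGraph V'} [Fintype V'] [DecidableEq V']
    [DecidableRel G'.Adj] {a' : V' → S} {u : V} {u' : V'} {R : Finset (V × V')}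
    (hR : ExactMatching G a G' a' u u' R) {L : Type*} {f : V → L} {g : V' → L}
    (hfg : ∀ e ∈ R, f e.1 = g e.2) :
    (G.neighborFinset u).val.map f = (G'.neighborFinset u').val.map g := by
  obtain ⟨hmem, hc, hc', hinj, -⟩ := hR
  have i1 : Set.InjOn Prod.fst (R : Set (V × V')) := fun e he f hf h =>
    Prod.ext h ((hinj e he f hf).1 h)
  have i2 : Set.InjOn Prod.snd (R : Set (V × V')) := fun e he f hf h =>
    Prod.ext ((hinj e he f hf).2 h) h
  have e1 : R.image Prod.fst = G.neighborFinset u := by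
    apply Finset.eq_of_subset_of_card_le
    · exact Finset.image_subset_iff.2 fun e he => (hmem e he).1
    · rw [Finset.card_image_of_injOn i1, hc]
  have e2 : R.image Prod.snd = G'.neighborFinset u' := by
    apply Finset.eq_of_subset_of_card_le
    · exact Finset.image_subset_iff.2 fun e he => (hmem e he).2
    · rw [Finset.card_image_of_injOn i2, hc']
  rw [← e1, ← e2, Finset.image_val_of_injOn i1, Finset.image_val_of_injOn i2,
    Multiset.map_map, Multiset.map_map]
  exact Multiset.map_congr rfl hfg

/-- If `M(u,u')` is nonempty, then `a_{k+1}(u) = a'_{k+1}(u')` iff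
`a(u) = a'(u')` and there exists an exact matching `R ∈ M(u,u')` such that
`a_k(v) = a'_k(v')` for every `(v,v') ∈ R`; equivalently
`κ_subtree^{(k+1)}(u,u') = δ(a(u),a'(u')) · max_{R ∈ M(u,u')} Π_{(v,v') ∈ R} κ_subtree^{(k)}(v,v')`. -/
theorem statement3 {V V' S : Type*} (G : SimpleGraph V) [Fintype V] [DecidableEq V]
    [DecidableRel G.Adj] (a : V → S)
    (G' : SimpleGraph V') [Fintype V'] [DecidableEq V'] [DecidableRel G'.Adj]
    (a' : V' → S) (u : V) (u' : V')
    (hM : ∃ R : Finset (V × V'), ExactMatching G a G' a' u u' R) (k : ℕ) :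
    wlLabel G a (k+1) u = wlLabel G' a' (k+1) u' ↔
      a u = a' u' ∧
        ∃ R : Finset (V × V'), ExactMatching G a G' a' u u' R ∧
          ∀ e ∈ R, wlLabel G a k e.1 = wlLabel G' a' k e.2 := by
  constructor
  · intro h
    have hroot : wlLabel G a 0 u = wlLabel G' a' 0 u' :=
      wlLabel_eq_of_le G a G' a' (Nat.zero_le _) h
    have hnbr : (G.neighborFinset u).val.map (wlLabel G a k) =
        (G'.neighborFinset u').val.map (wlLabel G' a' k) := congrArg Prod.snd h
    rw [← Multiset.rel_eq, Multiset.rel_map] at hnbr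
    obtain ⟨m, h1, h2, h3⟩ := hnbr.exists_pairs
    have n1 : (m.map Prod.fst).Nodup := h1 ▸ (G.neighborFinset u).nodup
    have n2 : (m.map Prod.snd).Nodup := h2 ▸ (G'.neighborFinset u').nodup
    refine ⟨hroot, ⟨m, n1.of_map⟩, ⟨?_, ?_, ?_, ?_, ?_⟩, h3⟩
    · intro e he
      rw [← Finset.mem_val, ← Finset.mem_val, ← h1, ← h2]
      exact ⟨Multiset.mem_map_of_mem _ he, Multiset.mem_map_of_mem _ he⟩
    · rw [Finset.card_def, Finset.card_def, ← h1, Multiset.card_map]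
    · rw [Finset.card_def, Finset.card_def, ← h2, Multiset.card_map]
    · intro e he f hf
      exact ⟨fun h => congrArg Prod.snd (Multiset.inj_on_of_nodup_map n1 e he f hf h),
        fun h => congrArg Prod.fst (Multiset.inj_on_of_nodup_map n2 e he f hf h)⟩
    · intro e he
      exact wlLabel_eq_of_le G a G' a' (Nat.zero_le k) (h3 e he)
  · rintro ⟨hroot, R, hR, hRk⟩
    have key : ∀ i ≤ k + 1, wlLabel G a i u = wlLabel G' a' i u' := by
      intro i
      induction i with
      | zero => exact fun _ => hroot
      | succ i ih =>
        intro hi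
        exact Prod.ext (ih (by omega)) (hR.map_eq fun e he =>
          wlLabel_eq_of_le G a G' a' (by omega) (hRk e he))
    exact key (k + 1) le_rfl
end

section
/- Let (G, a) and (G', a') be attributed graphs with attributes in the same set Σ, let k ≥ 0, and let u be a vertex of G and u' a vertex of G'. If a_k(u) = a'_k(u') (i.e., the depth-k WL subtree kernel distance between u and u' vanishes), then the multiset {{a(p) : p ∈ W_k(G, u)}} of attribute sequences of walks of length k from u equals the multiset {{a'(p') : p' ∈ W_k(G', u')}} of attribute sequences of walks of length k from u'; in particular κ_walk^{(k)}(u, u) − 2κ_walk^{(k)}(u, u') + κ_walk^{(k)}(u', u') = 0. -/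
/-!
The multiset of attribute sequences of the walks of length `k` from `u` is a function of the
depth-`k` WL label of `u` alone. A walk of length `k + 1` from `u` is `u` followed by a walk of
length `k` from a neighbor of `u` (`walks_succ`), so the sequences can be read off the label
recursively: prepend the root attribute to the sequences decoded from the labels in the neighbor
multiset (`decodeSeqs`, `map_walks_eq_decodeSeqs`). Equal labels therefore give equal multisets.

The walk kernel depends only on the two multisets of attribute sequences
(`walkKernel_eq_seqKernel`), so when these agree its three values coincide.
-/

open Finset

/-- The original vertex attribute stored in a depth-`k` WL label. -/
def rootAttr {S : Type*} : (k : ℕ) → wlLabelType S k → S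
  | 0, l => l
  | k+1, l => rootAttr k l.1

/-- The multiset of attribute sequences of length-`k` walks encoded by a depth-`k` WL label. -/
def decodeSeqs {S : Type*} : (k : ℕ) → wlLabelType S k → Multiset (Fin (k+1) → S)
  | 0, l => {fun _ => l}
  | k+1, l => (l.2.bind (decodeSeqs k)).map
      (Fin.cons (α := fun _ => S) (rootAttr k l.1))

lemma rootAttr_wlLabel {V S : Type*} (G : SimpleGraph V) [Fintype V]
    [DecidableRel G.Adj] (a : V → S) (k : ℕ) (u : V) :
    rootAttr k (wlLabel G a k u) = a u := by
  induction k with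
  | zero => rfl
  | succ k ih => exact ih

lemma mem_walks {V : Type*} (G : SimpleGraph V) [Fintype V] [DecidableEq V]
    [DecidableRel G.Adj] {k : ℕ} {u : V} {p : Fin (k+1) → V} :
    p ∈ walks G k u ↔ p 0 = u ∧ ∀ j : Fin k, G.Adj (p j.castSucc) (p j.succ) := by
  simp [walks]

/-- Splitting off the first vertex of a walk; the union over the second vertex is disjoint. -/
lemma walks_succ {V : Type*} (G : SimpleGraph V) [Fintype V] [DecidableEq V]
    [DecidableRel G.Adj] (k : ℕ) (u : V) :
    (walks G (k+1) u).val = ((G.neighborFinset u).val.bind fun v => (walks G k v).val).map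
      (Fin.cons (α := fun _ => V) u) := by
  have hdisj : ((G.neighborFinset u : Finset V) : Set V).PairwiseDisjoint (walks G k) := by
    intro v _ w _ hvw
    refine Finset.disjoint_left.2 fun p hp hq => hvw ?_
    rw [← ((mem_walks G).1 hp).1, ((mem_walks G).1 hq).1]
  have key : walks G (k+1) u = ((G.neighborFinset u).disjiUnion (walks G k) hdisj).map
      ⟨Fin.cons (α := fun _ => V) u, Fin.cons_right_injective (α := fun _ => V) u⟩ := by
    ext p
    simp only [mem_walks, Finset.mem_map, Finset.mem_disjiUnion, SimpleGraph.mem_neighborFinset,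
      Function.Embedding.coeFn_mk]
    constructor
    · rintro ⟨rfl, hp⟩
      exact ⟨Fin.tail p, ⟨p 1, hp 0, rfl, fun j => hp j.succ⟩, Fin.cons_self_tail p⟩
    · rintro ⟨q, ⟨v, huv, rfl, hq⟩, rfl⟩
      refine ⟨rfl, fun j => ?_⟩
      refine Fin.cases ?_ (fun i => ?_) j
      · exact huv
      · exact hq i
  rw [key]
  rfl

lemma map_walks_eq_decodeSeqs {V S : Type*} (G : SimpleGraph V) [Fintype V] [DecidableEq V]
    [DecidableRel G.Adj] (a : V → S) (k : ℕ) (u : V) :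
    (walks G k u).val.map (fun p => a ∘ p) = decodeSeqs k (wlLabel G a k u) := by
  induction k generalizing u with
  | zero =>
    have hw : walks G 0 u = {fun _ => u} := by
      ext p
      rw [mem_walks, Finset.mem_singleton]
      constructor
      · rintro ⟨h, -⟩
        funext i
        rw [show i = 0 from Subsingleton.elim (α := Fin 1) i 0, h]
      · rintro rfl
        exact ⟨rfl, fun j => j.elim0⟩
    rw [hw]
    rfl
  | succ k ih =>
    have hcons : ∀ q : Fin (k+1) → V, a ∘ (Fin.cons (α := fun _ => V) u q) =
        Fin.cons (α := fun _ => S) (a u) (a ∘ q) := fun q => by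
      funext i
      refine Fin.cases ?_ (fun j => ?_) i <;> rfl
    rw [walks_succ, Multiset.map_map]
    simp only [decodeSeqs, wlLabel, rootAttr_wlLabel, Multiset.bind_map, ← ih,
      Multiset.map_bind, Multiset.map_map, Function.comp_apply, hcons]

/-- The Dirac kernel summed over all pairs from two multisets. -/
noncomputable def seqKernel {α : Type*} (A B : Multiset α) : ℝ :=
  (A.map fun s => (B.map fun t => dirac s t).sum).sum

lemma walkKernel_eq_seqKernel {V V' S : Type*} (G : SimpleGraph V) [Fintype V]
    [DecidableEq V] [DecidableRel G.Adj] (a : V → S)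
    (G' : SimpleGraph V') [Fintype V'] [DecidableEq V'] [DecidableRel G'.Adj]
    (a' : V' → S) (k : ℕ) (u : V) (u' : V') :
    walkKernel G a G' a' k u u' = seqKernel ((walks G k u).val.map fun p => a ∘ p)
      ((walks G' k u').val.map fun p => a' ∘ p) := by
  simp only [walkKernel, seqKernel, Multiset.map_map]
  rfl

/-- If the depth-`k` WL labels of `u` and `u'` agree, then the
multisets of attribute sequences of walks of length `k` from `u` and from `u'`
coincide; in particular `κ_walk^{(k)}(u,u) − 2κ_walk^{(k)}(u,u') + κ_walk^{(k)}(u',u') = 0`. -/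
theorem statement5 {V V' S : Type*} (G : SimpleGraph V) [Fintype V] [DecidableEq V]
    [DecidableRel G.Adj] (a : V → S)
    (G' : SimpleGraph V') [Fintype V'] [DecidableEq V'] [DecidableRel G'.Adj]
    (a' : V' → S) (k : ℕ) (u : V) (u' : V')
    (h : wlLabel G a k u = wlLabel G' a' k u') :
    (walks G k u).val.map (fun p => a ∘ p) = (walks G' k u').val.map (fun p => a' ∘ p) ∧
    walkKernel G a G a k u u - 2 * walkKernel G a G' a' k u u'
        + walkKernel G' a' G' a' k u' u' = 0 := by
  have hm : (walks G k u).val.map (fun p => a ∘ p) =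
      (walks G' k u').val.map (fun p => a' ∘ p) := by
    rw [map_walks_eq_decodeSeqs, map_walks_eq_decodeSeqs, h]
  refine ⟨hm, ?_⟩
  simp only [walkKernel_eq_seqKernel, hm]
  ring
end

section
/- Let (G, a) and (G', a') be attributed graphs with attributes in the same set Σ, let k ≥ 0, and let u be a vertex of G and u' a vertex of G' such that κ_walk^{(k)}(u, u) > 0 and κ_walk^{(k)}(u', u') > 0. Then the WL subtree kernel distance dominates the normalized walk kernel distance: √(2 − 2·δ(a_k(u), a'_k(u'))) ≥ √(2 − 2·κ_walk^{(k)}(u, u') / √(κ_walk^{(k)}(u, u) · κ_walk^{(k)}(u', u'))). -/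
/-! If the depth-`k` WL labels differ, the left side is `√2`, and the walk kernel is nonnegative, so
the right side is at most `√2`. If they agree, then the attribute sequences of the walks of length
`k` from `u` and from `u'` form the same multiset; this is stated as the equality of the sums of an
arbitrary function over these sequences (`sum_walks_eq_of_wlLabel_eq`) and proved by induction on
`k`, splitting a walk into its first step and the remaining walk (`sum_walks_succ`): equal labels at
depth `k + 1` match the neighbors of `u` with those of `u'` so that matched neighbors have equal
labels at depth `k`. Hence the three walk kernels coincide and the normalized kernel is `1`. -/

open Finset

lemma dirac_nonneg {α : Type*} (x y : α) : 0 ≤ dirac x y := by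
  unfold dirac
  split_ifs <;> simp

lemma walkKernel_nonneg {V V' S : Type*} (G : SimpleGraph V) [Fintype V]
    [DecidableEq V] [DecidableRel G.Adj] (a : V → S)
    (G' : SimpleGraph V') [Fintype V'] [DecidableEq V'] [DecidableRel G'.Adj]
    (a' : V' → S) (k : ℕ) (u : V) (u' : V') : 0 ≤ walkKernel G a G' a' k u u' :=
  Finset.sum_nonneg fun _ _ => Finset.sum_nonneg fun _ _ => dirac_nonneg _ _

lemma attr_eq_of_wlLabel_eq {V V' S : Type*} (G : SimpleGraph V) [Fintype V]
    [DecidableRel G.Adj] (a : V → S) (G' : SimpleGraph V') [Fintype V'] [DecidableRel G'.Adj]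
    (a' : V' → S) (k : ℕ) (u : V) (u' : V')
    (h : wlLabel G a k u = wlLabel G' a' k u') : a u = a' u' := by
  induction k with
  | zero => exact h
  | succ k ih => exact ih (congrArg Prod.fst h)

lemma walks_zero {V : Type*} (G : SimpleGraph V) [Fintype V] [DecidableEq V]
    [DecidableRel G.Adj] (u : V) : walks G 0 u = {fun _ => u} := by
  ext p
  simp only [walks, Finset.mem_filter, Finset.mem_univ, true_and, Finset.mem_singleton]
  refine ⟨fun hp => ?_, fun hp => ⟨by rw [hp], fun j => j.elim0⟩⟩
  funext j
  rw [Fin.fin_one_eq_zero j]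
  exact hp.1

/-- A walk of length `k + 1` from `u` is `u` followed by a walk of length `k` from a neighbor. -/
lemma sum_walks_succ {V : Type*} (G : SimpleGraph V) [Fintype V] [DecidableEq V]
    [DecidableRel G.Adj] (k : ℕ) (u : V) (g : (Fin (k + 2) → V) → ℝ) :
    ∑ p ∈ walks G (k + 1) u, g p =
      ∑ v ∈ G.neighborFinset u, ∑ q ∈ walks G k v, g (Fin.cons u q) := by
  rw [Finset.sum_sigma']
  symm
  refine Finset.sum_bij' (fun x _ => Fin.cons u x.2) (fun p _ => ⟨p 1, Fin.tail p⟩) ?_ ?_ ?_ ?_ ?_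
  · rintro ⟨v, q⟩ h
    simp only [Finset.mem_sigma, SimpleGraph.mem_neighborFinset, walks, Finset.mem_filter,
      Finset.mem_univ, true_and] at h ⊢
    obtain ⟨huv, hq, hw⟩ := h
    refine ⟨rfl, fun j => ?_⟩
    induction j using Fin.cases with
    | zero => simpa [hq] using huv
    | succ j => simpa [← Fin.succ_castSucc] using hw j
  · intro p h
    simp only [Finset.mem_sigma, SimpleGraph.mem_neighborFinset, walks, Finset.mem_filter,
      Finset.mem_univ, true_and] at h ⊢
    obtain ⟨rfl, hw⟩ := h
    exact ⟨hw 0, rfl, fun j => hw j.succ⟩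
  · rintro ⟨v, q⟩ h
    simp only [Finset.mem_sigma, walks, Finset.mem_filter] at h
    obtain ⟨-, -, rfl, -⟩ := h
    rfl
  · intro p h
    simp only [walks, Finset.mem_filter] at h
    obtain ⟨-, rfl, -⟩ := h
    exact Fin.cons_self_tail p
  · intros
    rfl

/-- Vertices with equal depth-`k` WL labels have the same multiset of attribute sequences of
`k`-walks, expressed by testing against an arbitrary function `f`. -/
lemma sum_walks_eq_of_wlLabel_eq {V V' S : Type*} (G : SimpleGraph V) [Fintype V]
    [DecidableEq V] [DecidableRel G.Adj] (a : V → S)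
    (G' : SimpleGraph V') [Fintype V'] [DecidableEq V'] [DecidableRel G'.Adj]
    (a' : V' → S) (k : ℕ) (u : V) (u' : V')
    (h : wlLabel G a k u = wlLabel G' a' k u') (f : (Fin (k + 1) → S) → ℝ) :
    ∑ p ∈ walks G k u, f (a ∘ p) = ∑ p' ∈ walks G' k u', f (a' ∘ p') := by
  induction k generalizing u u' with
  | zero =>
    have ha : a u = a' u' := h
    rw [walks_zero, walks_zero, Finset.sum_singleton, Finset.sum_singleton]
    congr 1
    funext _
    exact ha
  | succ k ih =>
    have ha : a u = a' u' := attr_eq_of_wlLabel_eq G a G' a' (k + 1) u u' h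
    have hN : (G.neighborFinset u).val.map (wlLabel G a k) =
        (G'.neighborFinset u').val.map (wlLabel G' a' k) := congrArg Prod.snd h
    -- equality of the label multisets, read as a label-preserving matching of the neighborhoods
    have hR := Multiset.rel_map.mp (Multiset.rel_eq.mpr hN)
    rw [sum_walks_succ, sum_walks_succ]
    refine congrArg Multiset.sum (Multiset.rel_eq.mp (Multiset.rel_map.mpr
      (hR.mono fun v _ v' _ hv => ?_)))
    have key := ih v v' hv fun s => f (Fin.cons (a u) s)
    simp only [Fin.comp_cons]
    rw [← ha]
    exact key

/-- The WL subtree kernel distance dominates the normalized walk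
kernel distance:
`√(2 − 2δ(a_k(u), a'_k(u'))) ≥ √(2 − 2κ_walk^{(k)}(u,u')/√(κ_walk^{(k)}(u,u)·κ_walk^{(k)}(u',u')))`. -/
theorem statement6 {V V' S : Type*} (G : SimpleGraph V) [Fintype V] [DecidableEq V]
    [DecidableRel G.Adj] (a : V → S)
    (G' : SimpleGraph V') [Fintype V'] [DecidableEq V'] [DecidableRel G'.Adj]
    (a' : V' → S) (k : ℕ) (u : V) (u' : V')
    (h1 : 0 < walkKernel G a G a k u u)
    (h2 : 0 < walkKernel G' a' G' a' k u' u') :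
    Real.sqrt (2 - 2 * dirac (wlLabel G a k u) (wlLabel G' a' k u')) ≥
      Real.sqrt (2 - 2 * walkKernel G a G' a' k u u' /
        Real.sqrt (walkKernel G a G a k u u * walkKernel G' a' G' a' k u' u')) := by
  by_cases h : wlLabel G a k u = wlLabel G' a' k u'
  · have e1 : walkKernel G a G a k u u = walkKernel G a G' a' k u u' :=
      Finset.sum_congr rfl fun p _ =>
        sum_walks_eq_of_wlLabel_eq G a G' a' k u u' h (dirac (a ∘ p))
    have e2 : walkKernel G a G' a' k u u' = walkKernel G' a' G' a' k u' u' :=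
      sum_walks_eq_of_wlLabel_eq G a G' a' k u u' h
        fun s => ∑ p' ∈ walks G' k u', dirac s (a' ∘ p')
    rw [e1, e2, Real.sqrt_mul_self h2.le, mul_div_assoc, div_self h2.ne']
    simp [dirac, h]
  · have hK := walkKernel_nonneg G a G' a' k u u'
    apply Real.sqrt_le_sqrt
    have : 0 ≤ 2 * walkKernel G a G' a' k u u' /
        Real.sqrt (walkKernel G a G a k u u * walkKernel G' a' G' a' k u' u') := by positivity
    simp only [dirac, h, if_false]
    linarith
end
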